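/- Let E ⊂ ℝ^{N×n} be compact and let U be an open bounded set with E ⊆ U. Define g : U → ℝ by g(η) := inf{ Σ_{i=1}^I μ_i dist(η_i; E) : I ∈ ℕ, (μ_i, η_i)_{1≤i≤I} with μ_i > 0, Σ_{i=1}^I μ_i = 1, satisfying (H_I(U)), and Σ_{i=1}^I μ_i η_i = η }. Then 0 ≤ g(η) < +∞ for every η ∈ U, g vanishes on E, and g is rank one convex on U in the following sense: for all A, B ∈ U with rank(A−B) = 1 such that λA + (1−λ)B ∈ U for every λ ∈ (0,1), one has g(λA + (1−λ)B) ≤ λ g(A) + (1−λ) g(B) for all λ ∈ [0,1]. -/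

import Mathlib

open MeasureTheory Filter

attribute [local instance] Classical.propDecidable
attribute [local instance] Matrix.frobeniusNormedAddCommGroup Matrix.frobeniusNormedSpace

noncomputable section

/-- The space of real `N × n` matrices. -/
abbrev Mat (N n : ℕ) : Type := Matrix (Fin N) (Fin n) ℝ

/-- A function `f : ℝ^{N×n} → ℝ` is rank one convex. -/
def RankOneConvexFun {N n : ℕ} (f : Mat N n → ℝ) : Prop :=
  ∀ lam ∈ Set.Icc (0:ℝ) 1, ∀ ξ η : Mat N n, (ξ - η).rank = 1 →
    f (lam • ξ + (1 - lam) • η) ≤ lam * f ξ + (1 - lam) * f η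

/-- The hull `Rco_f E`. -/
def RcoF {N n : ℕ} (E : Set (Mat N n)) : Set (Mat N n) :=
  {ξ | ∀ f : Mat N n → ℝ, RankOneConvexFun f → (∀ η ∈ E, f η ≤ 0) → f ξ ≤ 0}

/-- A set of matrices is rank one convex. -/
def RankOneConvexSet {N n : ℕ} (S : Set (Mat N n)) : Prop :=
  ∀ A ∈ S, ∀ B ∈ S, (A - B).rank = 1 → ∀ t ∈ Set.Icc (0:ℝ) 1, t • A + (1 - t) • B ∈ S

/-- The property `(H_I(U))`, phrased on lists of (weight, matrix) pairs. -/
inductive HIProp {N n : ℕ} (U : Set (Mat N n)) : List (ℝ × Mat N n) → Prop where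
  | single (l : ℝ) (ξ : Mat N n) (hξ : ξ ∈ U) : HIProp U [(l, ξ)]
  | pair (l₁ l₂ : ℝ) (ξ₁ ξ₂ : Mat N n) (h₁ : ξ₁ ∈ U) (h₂ : ξ₂ ∈ U)
      (hrank : (ξ₁ - ξ₂).rank = 1) : HIProp U [(l₁, ξ₁), (l₂, ξ₂)]
  | step (L rest : List (ℝ × Mat N n)) (l₁ l₂ : ℝ) (ξ₁ ξ₂ : Mat N n)
      (hperm : L.Perm ((l₁, ξ₁) :: (l₂, ξ₂) :: rest)) (hrest : rest ≠ [])
      (h₁ : ξ₁ ∈ U) (h₂ : ξ₂ ∈ U) (hrank : (ξ₁ - ξ₂).rank = 1)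
      (hrec : HIProp U ((l₁ + l₂, ((l₁ + l₂)⁻¹) • (l₁ • ξ₁ + l₂ • ξ₂)) :: rest)) :
      HIProp U L

/-- The family `(λ_i, ξ_i)_{1 ≤ i ≤ I}` satisfies `(H_I(U))`. -/
def SatisfiesH {N n : ℕ} (U : Set (Mat N n)) (I : ℕ) (l : Fin I → ℝ)
    (ξ : Fin I → Mat N n) : Prop :=
  HIProp U (List.ofFn fun i => (l i, ξ i))

/-- The gradient of a map `u : ℝ^n → ℝ^N`, as an `N × n` matrix. -/
def matGrad {N n : ℕ} (u : (Fin n → ℝ) → Fin N → ℝ) (x : Fin n → ℝ) : Mat N n :=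
  LinearMap.toMatrix' (fderiv ℝ u x).toLinearMap

/-- `u` is affine on the set `s`. -/
def AffineOn {N n : ℕ} (u : (Fin n → ℝ) → Fin N → ℝ) (s : Set (Fin n → ℝ)) : Prop :=
  ∃ (A : Mat N n) (b : Fin N → ℝ), ∀ x ∈ s, u x = A.mulVec x + b

/-- `u` is piecewise affine on the open set `Ω`. -/
def PiecewiseAffineOn {N n : ℕ} (u : (Fin n → ℝ) → Fin N → ℝ)
    (Ω : Set (Fin n → ℝ)) : Prop :=
  ContinuousOn u (closure Ω) ∧
  ∃ P : ℕ → Set (Fin n → ℝ),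
    (∀ k, IsOpen (P k)) ∧ (∀ k, P k ⊆ Ω) ∧
    (∀ k l, k ≠ l → Disjoint (P k) (P l)) ∧
    volume (Ω \ ⋃ k, P k) = 0 ∧ ∀ k, AffineOn u (P k)

/-- `u` is piecewise `C¹` on the open set `Ω`. -/
def PiecewiseC1On {N n : ℕ} (u : (Fin n → ℝ) → Fin N → ℝ)
    (Ω : Set (Fin n → ℝ)) : Prop :=
  ContinuousOn u (closure Ω) ∧
  ∃ P : ℕ → Set (Fin n → ℝ),
    (∀ k, IsOpen (P k)) ∧ (∀ k, P k ⊆ Ω) ∧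
    (∀ k l, k ≠ l → Disjoint (P k) (P l)) ∧
    volume (Ω \ ⋃ k, P k) = 0 ∧ ∀ k, ContDiffOn ℝ 1 u (P k)

/-- `u ∈ φ + W₀^{1,∞}(Ω; ℝ^N)`: `u` is Lipschitz on `closure Ω` and agrees with `φ`
on the boundary of `Ω`. -/
def MemW01inf {N n : ℕ} (Ω : Set (Fin n → ℝ)) (φ u : (Fin n → ℝ) → Fin N → ℝ) : Prop :=
  (∃ C : NNReal, LipschitzOnWith C u (closure Ω)) ∧ ∀ x ∈ frontier Ω, u x = φ x

/-- `K` has the relaxation property with respect to `E`. -/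
def HasRelaxationProperty {N n : ℕ} (K E : Set (Mat N n)) : Prop :=
  ∀ Ω : Set (Fin n → ℝ), IsOpen Ω → Bornology.IsBounded Ω →
    ∀ ξ ∈ K, ∀ b : Fin N → ℝ,
      ∃ u : ℕ → (Fin n → ℝ) → Fin N → ℝ,
        (∀ ν, PiecewiseAffineOn (u ν) Ω) ∧
        (∀ ν, MemW01inf Ω (fun x => ξ.mulVec x + b) (u ν)) ∧
        (∀ ν, ∀ᵐ x ∂(volume.restrict Ω), matGrad (u ν) x ∈ E ∪ K) ∧
        (∃ C : NNReal, ∀ ν, LipschitzOnWith C (u ν) (closure Ω)) ∧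
        TendstoUniformlyOn u (fun x => ξ.mulVec x + b) atTop (closure Ω) ∧
        Tendsto (fun ν => ∫ x in Ω, Metric.infDist (matGrad (u ν) x) E) atTop (nhds 0)

/-- The singular values of a square matrix, in nondecreasing order:
the square roots of the eigenvalues of `ξ ξᵀ`, sorted. -/
def singularValues {n : ℕ} (ξ : Matrix (Fin n) (Fin n) ℝ) (i : Fin n) : ℝ :=
  Real.sqrt ((Matrix.isHermitian_mul_conjTranspose_self ξ).eigenvalues
    (Tuple.sort (Matrix.isHermitian_mul_conjTranspose_self ξ).eigenvalues i))

end

section Statements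

open Metric Set

theorem mat_rank_neg {N n : ℕ} (A : Mat N n) : (-A).rank = A.rank := by
  have h : (-A).mulVecLin = -A.mulVecLin := by
    ext; simp
  unfold Matrix.rank
  rw [h, LinearMap.range_neg]

theorem hi_perm {N n : ℕ} {U : Set (Mat N n)} {L L' : List (ℝ × Mat N n)}
    (h : HIProp U L) (hp : L'.Perm L) : HIProp U L' := by
  cases h with
  | single l ξ hξ =>
    rw [List.perm_singleton] at hp
    subst hp
    exact HIProp.single l ξ hξ
  | pair l₁ l₂ ξ₁ ξ₂ h₁ h₂ hrank =>
    have hlen := hp.length_eq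
    match L', hlen with
    | [a, b], _ =>
      rcases (List.cons_perm_iff_perm_erase.1 hp) with ⟨ha, hb⟩
      by_cases hax : a = (l₁, ξ₁)
      · subst hax
        rw [List.perm_cons] at hp
        have := List.perm_singleton.1 hp
        simp only [List.cons.injEq, and_true] at this
        subst this
        exact HIProp.pair l₁ l₂ ξ₁ ξ₂ h₁ h₂ hrank
      · have ha2 : a = (l₂, ξ₂) := by simpa [hax] using ha
        subst ha2
        have hp2 := hp.trans (List.Perm.swap _ _ _)
        rw [List.perm_cons] at hp2
        have := List.perm_singleton.1 hp2
        simp only [List.cons.injEq, and_true] at this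
        subst this
        refine HIProp.pair l₂ l₁ ξ₂ ξ₁ h₂ h₁ ?_
        rw [← neg_sub, mat_rank_neg]
        exact hrank
  | step L rest l₁ l₂ ξ₁ ξ₂ hperm hrest h₁ h₂ hrank hrec =>
    exact HIProp.step _ rest l₁ l₂ ξ₁ ξ₂ (hp.trans hperm) hrest h₁ h₂ hrank hrec

theorem hi_scale {N n : ℕ} {U : Set (Mat N n)} {L : List (ℝ × Mat N n)}
    (h : HIProp U L) (c : ℝ) (hc : c ≠ 0) :
    HIProp U (L.map (fun p => (c * p.1, p.2))) := by
  induction h with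
  | single l ξ hξ => exact HIProp.single _ _ hξ
  | pair l₁ l₂ ξ₁ ξ₂ h₁ h₂ hrank => exact HIProp.pair _ _ _ _ h₁ h₂ hrank
  | step L rest l₁ l₂ ξ₁ ξ₂ hperm hrest h₁ h₂ hrank hrec ih =>
    refine HIProp.step _ (rest.map (fun p => (c * p.1, p.2))) (c * l₁) (c * l₂) ξ₁ ξ₂
      (hperm.map _) (by simpa using hrest) h₁ h₂ hrank ?_
    have e : (c * l₁ + c * l₂)⁻¹ • ((c * l₁) • ξ₁ + (c * l₂) • ξ₂)
        = (l₁ + l₂)⁻¹ • (l₁ • ξ₁ + l₂ • ξ₂) := by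
      rw [mul_smul, mul_smul, ← smul_add, ← mul_add, smul_smul, mul_inv, mul_comm c⁻¹, mul_assoc,
        inv_mul_cancel₀ hc, mul_one]
    rw [e, ← mul_add]
    exact ih

theorem hi_append {N n : ℕ} {U : Set (Mat N n)} {L : List (ℝ × Mat N n)}
    (h : HIProp U L) : (∀ p ∈ L, 0 < p.1) → ∀ (s : ℝ) (A : Mat N n)
    (R : List (ℝ × Mat N n)), (L.map (fun p => p.1)).sum = s →
    (L.map (fun p => p.1 • p.2)).sum = s • A → R ≠ [] → HIProp U ((s, A) :: R) →
    HIProp U (L ++ R) := by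
  induction h with
  | single l ξ hξ =>
    intro hpos s A R hs hA hR hH
    simp only [List.map_cons, List.map_nil, List.sum_cons, List.sum_nil, add_zero] at hs hA
    subst hs
    have hl : l ≠ 0 := (hpos (l, ξ) (by simp)).ne'
    have : ξ = A := smul_right_injective _ hl hA
    subst this
    exact hH
  | pair l₁ l₂ ξ₁ ξ₂ h₁ h₂ hrank =>
    intro hpos s A R hs hA hR hH
    simp only [List.map_cons, List.map_nil, List.sum_cons, List.sum_nil, add_zero] at hs hA
    have hl1 : 0 < l₁ := hpos (l₁, ξ₁) (by simp)
    have hl2 : 0 < l₂ := hpos (l₂, ξ₂) (by simp)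
    have hs0 : s ≠ 0 := by rw [← hs]; positivity
    refine HIProp.step _ R l₁ l₂ ξ₁ ξ₂ (List.Perm.refl _) hR h₁ h₂ hrank ?_
    rw [hs, hA, smul_smul, inv_mul_cancel₀ hs0, one_smul]
    exact hH
  | step L rest l₁ l₂ ξ₁ ξ₂ hperm hrest h₁ h₂ hrank hrec ih =>
    intro hpos s A R hs hA hR hH
    have hl1 : 0 < l₁ := hpos (l₁, ξ₁) (hperm.mem_iff.2 (by simp))
    have hl2 : 0 < l₂ := hpos (l₂, ξ₂) (hperm.mem_iff.2 (by simp))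
    have hs0 : l₁ + l₂ ≠ 0 := by positivity
    refine HIProp.step _ (rest ++ R) l₁ l₂ ξ₁ ξ₂ (hperm.append_right R) (by simp [hR])
      h₁ h₂ hrank ?_
    refine ih ?_ s A R ?_ ?_ hR hH
    · intro p hp
      rcases List.mem_cons.1 hp with rfl | hp
      · exact add_pos hl1 hl2
      · exact hpos p (hperm.mem_iff.2 (by simp [hp]))
    · rw [← hs, (hperm.map _).sum_eq]
      simp [add_assoc]
    · rw [← hA, (hperm.map _).sum_eq]
      simp only [List.map_cons, List.sum_cons]
      rw [smul_smul, mul_inv_cancel₀ hs0, one_smul, add_assoc]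

theorem cand_iff {N n : ℕ} (E U : Set (Mat N n)) (η : Mat N n) (r : ℝ) :
    (∃ (I : ℕ) (μ : Fin I → ℝ) (ηs : Fin I → Mat N n),
      (∀ i, 0 < μ i) ∧ ∑ i, μ i = 1 ∧ SatisfiesH U I μ ηs ∧
      η = ∑ i, μ i • ηs i ∧ r = ∑ i, μ i * Metric.infDist (ηs i) E) ↔
    ∃ L : List (ℝ × Mat N n), (∀ p ∈ L, 0 < p.1) ∧ (L.map (fun p => p.1)).sum = 1 ∧
      HIProp U L ∧ η = (L.map (fun p => p.1 • p.2)).sum ∧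
      r = (L.map (fun p => p.1 * Metric.infDist p.2 E)).sum := by
  constructor
  · rintro ⟨I, μ, ηs, h1, h2, h3, h4, h5⟩
    refine ⟨List.ofFn fun i => (μ i, ηs i), ?_, ?_, h3, ?_, ?_⟩
    · intro p hp
      obtain ⟨i, rfl⟩ := (List.mem_ofFn' _ _).1 hp
      exact h1 i
    · rw [List.map_ofFn, List.sum_ofFn]; exact h2
    · rw [List.map_ofFn, List.sum_ofFn]; exact h4
    · rw [List.map_ofFn, List.sum_ofFn]; exact h5
  · rintro ⟨L, h1, h2, h3, h4, h5⟩
    have key : L = List.ofFn (fun i => ((L.get i).1, (L.get i).2)) := (List.ofFn_get L).symm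
    refine ⟨L.length, fun i => (L.get i).1, fun i => (L.get i).2, ?_, ?_, ?_, ?_, ?_⟩
    · intro i
      exact h1 _ (List.get_mem L i)
    · rw [key, List.map_ofFn, List.sum_ofFn] at h2; exact h2
    · unfold SatisfiesH; rw [← key]; exact h3
    · rw [h4]; conv_lhs => rw [key, List.map_ofFn, List.sum_ofFn]
      rfl
    · rw [h5]; conv_lhs => rw [key, List.map_ofFn, List.sum_ofFn]
      rfl

theorem sum_scale {N n : ℕ} {M : Type*} [AddCommGroup M] [Module ℝ M] (f : Mat N n → M)
    (c : ℝ) (L : List (ℝ × Mat N n)) :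
    ((L.map (fun p => (c * p.1, p.2))).map (fun p => p.1 • f p.2)).sum
      = c • (L.map (fun p => p.1 • f p.2)).sum := by
  induction L with
  | nil => simp
  | cons a L ih =>
    simp only [List.map_cons, List.sum_cons, smul_add, mul_smul] at ih ⊢
    rw [ih]

theorem stmt19 {N n : ℕ} (E : Set (Mat N n)) (hE : IsCompact E)
    (U : Set (Mat N n)) (hUo : IsOpen U) (hUb : Bornology.IsBounded U) (hEU : E ⊆ U)
    (g : Mat N n → ℝ)
    (hg : ∀ η, g η = sInf {r : ℝ | ∃ (I : ℕ) (μ : Fin I → ℝ) (ηs : Fin I → Mat N n),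
      (∀ i, 0 < μ i) ∧ ∑ i, μ i = 1 ∧ SatisfiesH U I μ ηs ∧
      η = ∑ i, μ i • ηs i ∧ r = ∑ i, μ i * Metric.infDist (ηs i) E}) :
    (∀ η ∈ U,
      {r : ℝ | ∃ (I : ℕ) (μ : Fin I → ℝ) (ηs : Fin I → Mat N n),
        (∀ i, 0 < μ i) ∧ ∑ i, μ i = 1 ∧ SatisfiesH U I μ ηs ∧
        η = ∑ i, μ i • ηs i ∧ r = ∑ i, μ i * Metric.infDist (ηs i) E}.Nonempty ∧
      0 ≤ g η) ∧
    (∀ η ∈ E, g η = 0) ∧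
    (∀ A ∈ U, ∀ B ∈ U, (A - B).rank = 1 →
      (∀ t ∈ Set.Ioo (0:ℝ) 1, t • A + (1 - t) • B ∈ U) →
      ∀ t ∈ Set.Icc (0:ℝ) 1, g (t • A + (1 - t) • B) ≤ t * g A + (1 - t) * g B) := by
  simp only [cand_iff] at hg ⊢
  have hnn : ∀ η, ∀ r ∈ {r : ℝ | ∃ L : List (ℝ × Mat N n), (∀ p ∈ L, 0 < p.1) ∧
      (L.map (fun p => p.1)).sum = 1 ∧
      HIProp U L ∧ η = (L.map (fun p => p.1 • p.2)).sum ∧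
      r = (L.map (fun p => p.1 * Metric.infDist p.2 E)).sum}, 0 ≤ r := by
    rintro η r ⟨L, h1, -, -, -, rfl⟩
    apply List.sum_nonneg
    intro x hx
    obtain ⟨p, hp, rfl⟩ := List.mem_map.1 hx
    exact mul_nonneg (h1 p hp).le Metric.infDist_nonneg
  have hsing : ∀ η ∈ U, ∃ L : List (ℝ × Mat N n), (∀ p ∈ L, 0 < p.1) ∧
      (L.map (fun p => p.1)).sum = 1 ∧
      HIProp U L ∧ η = (L.map (fun p => p.1 • p.2)).sum ∧
      Metric.infDist η E = (L.map (fun p => p.1 * Metric.infDist p.2 E)).sum := fun η hη =>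
    ⟨[(1, η)], by simp, by simp, HIProp.single _ _ hη, by simp, by simp⟩
  have hg0 : ∀ η, 0 ≤ g η := fun η => by
    rw [hg]; exact Real.sInf_nonneg (hnn η)
  refine ⟨fun η hη => ⟨⟨_, hsing η hη⟩, hg0 η⟩, fun η hη => ?_, ?_⟩
  · refine le_antisymm ?_ (hg0 η)
    have h := csInf_le ⟨0, hnn η⟩ (hsing η (hEU hη))
    rw [← hg, Metric.infDist_zero_of_mem hη] at h
    exact h
  · intro A hA B hB hrank _ t ht
    rcases ht.1.eq_or_lt with h0 | h0
    · subst h0; simp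
    rcases ht.2.eq_or_lt with h1 | h1
    · subst h1; simp
    have h1' : 0 < 1 - t := sub_pos.2 h1
    refine le_of_forall_pos_le_add fun ε hε => ?_
    have hlA : g A < g A + ε := by linarith
    have hlB : g B < g B + ε := by linarith
    nth_rewrite 1 [hg A] at hlA
    nth_rewrite 1 [hg B] at hlB
    obtain ⟨a, ⟨LA, a1, a2, a3, a4, a5⟩, ha⟩ := exists_lt_of_csInf_lt (by exact ⟨_, hsing A hA⟩) hlA
    obtain ⟨b, ⟨LB, b1, b2, b3, b4, b5⟩, hb⟩ := exists_lt_of_csInf_lt (by exact ⟨_, hsing B hB⟩) hlB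
    have sA := sum_scale (fun _ : Mat N n => (1:ℝ)) t LA
    have sB := sum_scale (fun _ : Mat N n => (1:ℝ)) (1 - t) LB
    have vA := sum_scale (fun x : Mat N n => x) t LA
    have vB := sum_scale (fun x : Mat N n => x) (1 - t) LB
    have dA := sum_scale (fun x : Mat N n => Metric.infDist x E) t LA
    have dB := sum_scale (fun x : Mat N n => Metric.infDist x E) (1 - t) LB
    simp only [smul_eq_mul, mul_one] at sA sB dA dB
    rw [a2, mul_one] at sA
    rw [b2, mul_one] at sB
    rw [← a4] at vA
    rw [← b4] at vB
    rw [← a5] at dA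
    rw [← b5] at dB
    have pA : ∀ p ∈ LA.map (fun p => (t * p.1, p.2)), 0 < p.1 := by
      intro p hp
      obtain ⟨q, hq, rfl⟩ := List.mem_map.1 hp
      exact mul_pos h0 (a1 q hq)
    have pB : ∀ p ∈ LB.map (fun p => ((1 - t) * p.1, p.2)), 0 < p.1 := by
      intro p hp
      obtain ⟨q, hq, rfl⟩ := List.mem_map.1 hp
      exact mul_pos h1' (b1 q hq)
    have hBne : LB.map (fun p => ((1 - t) * p.1, p.2)) ≠ [] := by
      intro h
      rw [h] at sB
      simp at sB
      linarith
    have H1 := hi_append (hi_scale b3 (1 - t) h1'.ne') pB (1 - t) B [(t, A)] sB vB (by simp)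
      (HIProp.pair _ _ _ _ hB hA (by rw [← neg_sub, mat_rank_neg]; exact hrank))
    have H2 := hi_append (hi_scale a3 t h0.ne') pA t A _ sA vA hBne
      (hi_perm H1 (List.perm_append_singleton _ _).symm)
    have hle : g (t • A + (1 - t) • B) ≤ t * a + (1 - t) * b := by
      rw [hg]
      refine csInf_le ⟨0, hnn _⟩ ⟨_, ?_, ?_, H2, ?_, ?_⟩
      · intro p hp
        rcases List.mem_append.1 hp with hp | hp
        · exact pA p hp
        · exact pB p hp
      · rw [List.map_append, List.sum_append, sA, sB]; ring
      · rw [List.map_append, List.sum_append, vA, vB]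
      · rw [List.map_append, List.sum_append, dA, dB]
    nlinarith [mul_lt_mul_of_pos_left ha h0, mul_lt_mul_of_pos_left hb h1']

end Statements
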